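/- Let α : [m] → [n] be a monotone map and Γ : [m+r] → [m] × [r] a maximal chain. Then there exists a unique pair (Γ', β) consisting of a maximal chain Γ' : [n+r] → [n] × [r] and a monotone map β : [m+r] → [n+r] such that Γ'(β(k)) = (α((Γ k).fst), (Γ k).snd) for all k ∈ [m+r]. -/

import Mathlib

/-!
Write `p k = (α (Γ k).1, (Γ k).2)`.  Every point of a maximal chain through the points `p k` is
comparable to all of them.  The points comparable to all `p k` already form a chain: if `q` and `q'`
were incomparable, say with `q'.2 < q.2` and `q.1 < q'.1`, then the vertical step of `Γ` leaving the
height `q'.2` would be pushed forward to a vertical step whose abscissa is both `≤ q.1` and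
`≥ q'.1`.  Hence at most one maximal chain passes through the `p k`, and one exists by Zorn's lemma.
Since the rank `x + y` of the `t`-th point of a maximal chain is `t`, the enumeration of that chain
is forced, and so is `β`.
-/

open Set

section Comparables

variable {A B P : Type*}

/-- The set of elements comparable to every element of `C`: the union of all the chains containing
`C`, when `C` is itself a chain. -/
def comparables [LE P] (C : Set P) : Set P :=
  {q | ∀ c ∈ C, q ≤ c ∨ c ≤ q}

theorem mem_comparables_of_subset_range [LinearOrder A] [Preorder P] {Γ : A → P}
    (hΓ : Monotone Γ) {C : Set P} (hC : C ⊆ range Γ) (t : A) : Γ t ∈ comparables C := by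
  intro c hc
  obtain ⟨s, rfl⟩ := hC hc
  exact (le_total t s).imp (@hΓ t s) (@hΓ s t)

/-- A vertical step of `C` is a pair of points of `C` on a common vertical line; `C` has vertical
steps if one of them leaves every height that is not maximal. -/
def HasVerticalSteps [Preorder B] (C : Set (A × B)) : Prop :=
  ∀ ⦃y : B⦄, ¬IsMax y → ∃ x z, y < z ∧ (x, y) ∈ C ∧ (x, z) ∈ C

theorem HasVerticalSteps.image_map_id {A' : Type*} [Preorder B] {C : Set (A × B)}
    (hC : HasVerticalSteps C) (f : A → A') : HasVerticalSteps (Prod.map f id '' C) := by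
  intro y hy
  obtain ⟨x, z, hyz, hxy, hxz⟩ := hC hy
  exact ⟨f x, z, hyz, mem_image_of_mem _ hxy, mem_image_of_mem _ hxz⟩

variable [LinearOrder A] [LinearOrder B]

theorem HasVerticalSteps.fst_le_fst {C : Set (A × B)} (hC : HasVerticalSteps C) {q q' : A × B}
    (hq : q ∈ comparables C) (hq' : q' ∈ comparables C) (hlt : q'.2 < q.2) : q'.1 ≤ q.1 := by
  obtain ⟨x, z, hyz, hxy, hxz⟩ := hC (not_isMax_of_lt hlt)
  have hx_le : x ≤ q.1 := ((hq _ hxy).resolve_left fun h ↦ hlt.not_ge h.2).1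
  have le_hx : q'.1 ≤ x := ((hq' _ hxz).resolve_right fun h ↦ hyz.not_ge h.2).1
  exact le_hx.trans hx_le

theorem HasVerticalSteps.isChain_comparables {C : Set (A × B)} (hC : HasVerticalSteps C) :
    IsChain (· ≤ ·) (comparables C) := by
  intro q hq q' hq' _
  rcases lt_trichotomy q.2 q'.2 with hlt | heq | hlt
  · exact .inl ⟨hC.fst_le_fst hq' hq hlt, hlt.le⟩
  · exact (le_total q.1 q'.1).imp (⟨·, heq.le⟩) (⟨·, heq.ge⟩)
  · exact .inr ⟨hC.fst_le_fst hq hq' hlt, hlt.le⟩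

end Comparables

theorem exists_castSucc_le_lt_succ {N : ℕ} {B : Type*} [LinearOrder B] {f : Fin (N + 1) → B} {y : B}
    (hzero : f 0 ≤ y) (hlast : y < f (Fin.last N)) :
    ∃ k : Fin N, f k.castSucc ≤ y ∧ y < f k.succ := by
  by_contra! hstay
  exact hlast.not_ge (Fin.induction (motive := (f · ≤ y)) hzero hstay (Fin.last N))

theorem injOn_of_isChain {P Q : Type*} [PartialOrder P] [Preorder Q] {f : P → Q}
    (hf : StrictMono f) {C : Set P} (hC : IsChain (· ≤ ·) C) : InjOn f C := by
  intro a ha b hb hab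
  rcases hC.total ha hb with hle | hge
  · exact hle.eq_of_not_lt fun hlt ↦ (hf hlt).ne hab
  · exact hge.eq_of_not_lt' fun hlt ↦ (hf hlt).ne' hab

section Grid

variable {n r : ℕ}

/-- The rank function of the graded poset `[n] × [r]`, bundled with its bound so that a maximal
chain `[n + r] → [n] × [r]` is a section of it. -/
def gridRank (q : Fin (n + 1) × Fin (r + 1)) : Fin (n + r + 1) :=
  ⟨q.1 + q.2, by omega⟩

theorem val_gridRank (q : Fin (n + 1) × Fin (r + 1)) : (gridRank q : ℕ) = q.1 + q.2 := rfl

theorem gridRank_bot : gridRank (⊥ : Fin (n + 1) × Fin (r + 1)) = ⊥ := rfl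

theorem gridRank_top : gridRank (⊤ : Fin (n + 1) × Fin (r + 1)) = ⊤ := rfl

theorem gridRank_strictMono : StrictMono (gridRank (n := n) (r := r)) := by
  intro q q' h
  rw [Fin.lt_def, val_gridRank, val_gridRank]
  rcases Prod.lt_iff.mp h with ⟨h₁, h₂⟩ | ⟨h₁, h₂⟩
  · exact add_lt_add_of_lt_of_le h₁ h₂
  · exact add_lt_add_of_le_of_lt h₁ h₂

theorem gridRank_apply_of_strictMono {Γ : Fin (n + r + 1) → Fin (n + 1) × Fin (r + 1)}
    (hΓ : StrictMono Γ) (k : Fin (n + r + 1)) : gridRank (Γ k) = k :=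
  (gridRank_strictMono.comp hΓ).apply_eq

theorem gridRank_surjOn_Icc {a b : Fin (n + 1) × Fin (r + 1)} (hab : a ≤ b) :
    SurjOn gridRank (Icc a b) (Icc (gridRank a) (gridRank b)) := by
  rintro ⟨t, ht⟩ ⟨hat, htb⟩
  obtain ⟨⟨a₁, _⟩, ⟨a₂, _⟩⟩ := a
  obtain ⟨⟨b₁, _⟩, ⟨b₂, _⟩⟩ := b
  simp only [Prod.mk_le_mk, Fin.mk_le_mk, gridRank] at hab hat htb
  -- Starting from `a`, move horizontally as far as the rank `t` and the bound `b` allow.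
  refine ⟨(⟨min b₁ (t - a₂), by omega⟩, ⟨t - min b₁ (t - a₂), by omega⟩), ⟨?_, ?_⟩, ?_⟩ <;>
    simp only [gridRank, Prod.mk_le_mk, Fin.mk_le_mk, Fin.mk.injEq] <;> omega

theorem gridRank_surjOn_flag (F : Flag (Fin (n + 1) × Fin (r + 1))) :
    SurjOn gridRank (F : Set (Fin (n + 1) × Fin (r + 1))) univ := by
  intro t _
  obtain ⟨a, -, ⟨haF, hat⟩, ha_max⟩ := Finite.exists_le_maximal
    (p := fun q ↦ q ∈ F ∧ gridRank q ≤ t) ⟨F.bot_mem, gridRank_bot.trans_le bot_le⟩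
  obtain ⟨b, -, ⟨hbF, htb⟩, hb_min⟩ := Finite.exists_le_minimal
    (p := fun q ↦ q ∈ F ∧ t ≤ gridRank q) ⟨F.top_mem, le_top.trans_eq gridRank_top.symm⟩
  have le_or_ge : ∀ c ∈ F, c ≤ a ∨ b ≤ c := by
    intro c hc
    rcases le_total (gridRank c) t with hct | htc
    · exact .inl ((F.le_or_le hc haF).elim id (ha_max ⟨hc, hct⟩))
    · exact .inr ((F.le_or_le hbF hc).elim id (hb_min ⟨hc, htc⟩))
  have hab : a ≤ b := F.chain_le.le_of_not_gt hbF haF fun hba ↦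
    (htb.trans_lt (gridRank_strictMono hba)).not_ge hat
  obtain ⟨q, ⟨haq, hqb⟩, hqt⟩ := gridRank_surjOn_Icc hab ⟨hat, htb⟩
  refine ⟨q, F.mem_iff_forall_le_or_ge.mpr fun c hc ↦ ?_, hqt⟩
  exact (le_or_ge c hc).symm.imp hqb.trans (·.trans haq)

theorem exists_strictMono_subset_range_of_isChain {C : Set (Fin (n + 1) × Fin (r + 1))}
    (hC : IsChain (· ≤ ·) C) :
    ∃ Γ : Fin (n + r + 1) → Fin (n + 1) × Fin (r + 1), StrictMono Γ ∧ C ⊆ range Γ := by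
  obtain ⟨F, hCF⟩ := hC.exists_subset_flag
  choose Γ hΓF hrank using fun t ↦ gridRank_surjOn_flag F (mem_univ t)
  refine ⟨Γ, fun s t hst ↦ ?_, fun c hc ↦ ⟨gridRank c, ?_⟩⟩
  · refine F.chain_le.lt_of_not_ge (hΓF t) (hΓF s) fun hle ↦ hst.not_ge ?_
    simpa only [hrank] using gridRank_strictMono.monotone hle
  · exact injOn_of_isChain gridRank_strictMono F.chain_le (hΓF _) (hCF hc) (hrank _)

theorem eq_of_hasVerticalSteps_of_subset_range {C : Set (Fin (n + 1) × Fin (r + 1))}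
    (hC : HasVerticalSteps C) {Γ₁ Γ₂ : Fin (n + r + 1) → Fin (n + 1) × Fin (r + 1)}
    (h₁ : StrictMono Γ₁) (h₂ : StrictMono Γ₂) (hC₁ : C ⊆ range Γ₁) (hC₂ : C ⊆ range Γ₂) :
    Γ₁ = Γ₂ := by
  funext t
  have hrank : gridRank (Γ₁ t) = gridRank (Γ₂ t) := by
    rw [gridRank_apply_of_strictMono h₁, gridRank_apply_of_strictMono h₂]
  exact injOn_of_isChain gridRank_strictMono hC.isChain_comparables
    (mem_comparables_of_subset_range h₁.monotone hC₁ t)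
    (mem_comparables_of_subset_range h₂.monotone hC₂ t) hrank

theorem hasVerticalSteps_range {Γ : Fin (n + r + 1) → Fin (n + 1) × Fin (r + 1)}
    (hΓ : StrictMono Γ) : HasVerticalSteps (range Γ) := by
  intro y hy
  have hrank (k) : ((Γ k).1 : ℕ) + (Γ k).2 = k :=
    congrArg Fin.val (gridRank_apply_of_strictMono hΓ k)
  have hzero : (Γ 0).2 ≤ y := by
    have := hrank 0
    rw [Fin.val_zero] at this
    omega
  have hlast : y < (Γ (Fin.last _)).2 := by
    have := hrank (Fin.last _)
    rw [Fin.val_last] at this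
    have : y < Fin.last r := lt_top_iff_ne_top.mpr fun h ↦ hy (isMax_iff_eq_top.mpr h)
    rw [Fin.lt_def, Fin.val_last] at this
    omega
  obtain ⟨k, hky, hyk⟩ := exists_castSucc_le_lt_succ (f := fun k ↦ (Γ k).2) hzero hlast
  have hfst : (Γ k.castSucc).1 ≤ (Γ k.succ).1 := (hΓ k.castSucc_lt_succ).le.1
  have hcast := hrank k.castSucc
  have hsucc := hrank k.succ
  simp only [Fin.val_castSucc, Fin.val_succ] at hcast hsucc
  have hstep : Γ k.castSucc = ((Γ k.succ).1, y) :=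
    Prod.ext (Fin.ext (by dsimp only; omega)) (Fin.ext (by dsimp only; omega))
  exact ⟨(Γ k.succ).1, (Γ k.succ).2, hyk, ⟨k.castSucc, hstep⟩, mem_range_self k.succ⟩

theorem existsUnique_strictMono_subset_range {C : Set (Fin (n + 1) × Fin (r + 1))}
    (hchain : IsChain (· ≤ ·) C) (hsteps : HasVerticalSteps C) :
    ∃! Γ : Fin (n + r + 1) → Fin (n + 1) × Fin (r + 1), StrictMono Γ ∧ C ⊆ range Γ := by
  obtain ⟨Γ, hΓ, hCΓ⟩ := exists_strictMono_subset_range_of_isChain hchain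
  exact ⟨Γ, ⟨hΓ, hCΓ⟩, fun Γ' ⟨hΓ', hCΓ'⟩ ↦
    eq_of_hasVerticalSteps_of_subset_range hsteps hΓ' hΓ hCΓ' hCΓ⟩

end Grid

/-- Let `α : [m] → [n]` be a monotone map and
`Γ : [m+r] → [m] × [r]` a maximal chain.  Then there exists a unique pair
`(Γ', β)` consisting of a maximal chain `Γ' : [n+r] → [n] × [r]` and a
monotone map `β : [m+r] → [n+r]` such that
`Γ'(β(k)) = (α((Γ k).fst), (Γ k).snd)` for all `k ∈ [m+r]`. -/
theorem pushforward_exists_unique (n m r : ℕ)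
    (α : Fin (m + 1) → Fin (n + 1)) (hαmono : Monotone α)
    (Γ : Fin (m + r + 1) → Fin (m + 1) × Fin (r + 1))
    (hΓmono : Monotone Γ) (hΓinj : Function.Injective Γ) :
    ∃! P : (Fin (n + r + 1) → Fin (n + 1) × Fin (r + 1)) ×
           (Fin (m + r + 1) → Fin (n + r + 1)),
      Monotone P.1 ∧ Function.Injective P.1 ∧ Monotone P.2 ∧
      ∀ k, P.1 (P.2 k) = (α (Γ k).1, (Γ k).2) := by
  have hpmono : Monotone (Prod.map α id ∘ Γ) := (hαmono.prodMap monotone_id).comp hΓmono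
  have hsteps : HasVerticalSteps (range (Prod.map α id ∘ Γ)) := by
    rw [range_comp]
    exact (hasVerticalSteps_range (hΓmono.strictMono_of_injective hΓinj)).image_map_id α
  obtain ⟨Γ', ⟨hΓ', hrange⟩, huniq⟩ :=
    existsUnique_strictMono_subset_range hpmono.isChain_range hsteps
  choose β hβ using fun k ↦ hrange (mem_range_self k)
  have hβmono : Monotone β := fun k l hkl ↦ by
    rw [← hΓ'.le_iff_le, hβ, hβ]
    exact hpmono hkl
  refine ⟨(Γ', β), ⟨hΓ'.monotone, hΓ'.injective, hβmono, hβ⟩, ?_⟩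
  rintro ⟨Γ'', β'⟩ ⟨hmono, hinj, -, hβ'⟩
  obtain rfl : Γ'' = Γ' := huniq Γ'' ⟨hmono.strictMono_of_injective hinj,
    range_subset_iff.mpr fun k ↦ ⟨β' k, hβ' k⟩⟩
  exact Prod.ext rfl (funext fun k ↦ hinj ((hβ' k).trans (hβ k).symm))
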